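/- arXiv:1306.1062 — 3 statements merged into one kernel-verified Lean document; each statement's English description precedes it below -/
import Mathlib

section
/- Let d ≥ 1, let ν be a σ-finite Borel measure on ℝ^d with 0 < ν({y : ‖y‖ > 1}) < ∞, let b ∈ ℝ^d, let β = 1/ν({y : ‖y‖ > 1}), and let F be the pushforward of the restriction of ν to {y : ‖y‖ > 1} under the translation y ↦ y + β·b. Let π ∈ ℝ^d satisfy F({z : ⟨π, z⟩ < −1}) = 0. Define a = 1/(1 + β⟨π, b⟩) if β⟨π, b⟩ > 0 and a = 1 otherwise, and set π'' = (a/(2 + a‖π‖))·π. Then ν({y : ⟨π'', y⟩ < −1}) = 0. -/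
open MeasureTheory
open scoped RealInnerProductSpace ENNReal

/-!
Each of the two factors of the renormalization excludes one kind of jump. Dividing by `2 + a‖π‖`
makes `‖π''‖ ≤ 1`, so by Cauchy–Schwarz no jump `y` with `‖y‖ ≤ 1` satisfies `⟪π'', y⟫ < -1`. The
factor `a` absorbs the translation: since `a (1 + ⟪π, c⟫) ≤ 1` for `c = β • b`, any jump with
`⟪π'', y⟫ < -1` also satisfies `⟪π, y + c⟫ < -1`, and the jumps with `‖y‖ > 1` of this kind are
`ν`-null by the assumption on `F`.
-/

section RenormalizingScalar

theorem ite_inv_one_add_pos (t : ℝ) : 0 < if 0 < t then (1 + t)⁻¹ else 1 := by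
  split_ifs <;> positivity

theorem ite_inv_one_add_mul_one_add_le_one (t : ℝ) :
    (if 0 < t then (1 + t)⁻¹ else 1) * (1 + t) ≤ 1 := by
  split_ifs with ht
  · exact inv_mul_le_one
  · linarith

theorem div_two_add_mul_le_one {a x u : ℝ} (hx : 0 ≤ x) (hau : a * u ≤ 1) :
    a / (2 + x) * u ≤ 1 := by
  rw [div_mul_eq_mul_div, div_le_one (by positivity)]
  linarith

end RenormalizingScalar

section InnerProductSpace

variable {E : Type*} [NormedAddCommGroup E] [InnerProductSpace ℝ E]

theorem norm_div_two_add_smul_le_one {a : ℝ} (ha : 0 ≤ a) (p : E) :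
    ‖(a / (2 + a * ‖p‖)) • p‖ ≤ 1 := by
  rw [norm_smul_of_nonneg (by positivity), div_mul_eq_mul_div, div_le_one (by positivity)]
  linarith

theorem lt_norm_of_inner_lt_neg_one {q y : E} {r : ℝ} (hq : ‖q‖ * r ≤ 1) (h : ⟪q, y⟫ < -1) :
    r < ‖y‖ := by
  by_contra! hy
  have cauchy_schwarz : -⟪q, y⟫ ≤ ‖q‖ * ‖y‖ := (neg_le_abs _).trans (abs_real_inner_le_norm q y)
  have norm_mul_le : ‖q‖ * ‖y‖ ≤ ‖q‖ * r := by gcongr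
  linarith

theorem inner_add_lt_neg_one_of_inner_smul_lt_neg_one {p y c : E} {s : ℝ} (hs : 0 ≤ s)
    (hsc : s * (1 + ⟪p, c⟫) ≤ 1) (h : ⟪s • p, y⟫ < -1) : ⟪p, y + c⟫ < -1 := by
  rw [real_inner_smul_left] at h
  rw [inner_add_right]
  have scaled : s * (⟪p, y⟫ + ⟪p, c⟫ + 1) < 0 := by linarith
  linarith [neg_of_mul_neg_right scaled hs]

variable [MeasurableSpace E] [MeasurableAdd E]

theorem measure_inner_smul_lt_neg_one_eq_zero_of_map_restrict (ν : Measure E) {p c : E} {r s : ℝ}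
    (hs : 0 ≤ s) (hsr : ‖s • p‖ * r ≤ 1) (hsc : s * (1 + ⟪p, c⟫) ≤ 1)
    (hnull : (ν.restrict {y | r < ‖y‖}).map (· + c) {z | ⟪p, z⟫ < -1} = 0) :
    ν {y | ⟪s • p, y⟫ < -1} = 0 := by
  have restrict_null : ν.restrict {y | r < ‖y‖} {y | ⟪p, y + c⟫ < -1} = 0 :=
    Measure.preimage_null_of_map_null (measurable_add_const c).aemeasurable hnull
  have inter_null : ν ({y | ⟪p, y + c⟫ < -1} ∩ {y | r < ‖y‖}) = 0 :=
    le_antisymm ((Measure.le_restrict_apply _ _).trans_eq restrict_null) zero_le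
  refine measure_mono_null (fun y hy ↦ ?_) inter_null
  exact ⟨inner_add_lt_neg_one_of_inner_smul_lt_neg_one hs hsc hy,
    lt_norm_of_inner_lt_neg_one hsr hy⟩

theorem stmt_1_general (ν : Measure E) {p c : E}
    (hnull : (ν.restrict {y | 1 < ‖y‖}).map (· + c) {z | ⟪p, z⟫ < -1} = 0)
    {a : ℝ} (ha : a = if 0 < ⟪p, c⟫ then (1 + ⟪p, c⟫)⁻¹ else 1) :
    ν {y | ⟪(a / (2 + a * ‖p‖)) • p, y⟫ < -1} = 0 := by
  have a_nonneg : 0 ≤ a := ha ▸ (ite_inv_one_add_pos _).le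
  have a_mul_le : a * (1 + ⟪p, c⟫) ≤ 1 := ha ▸ ite_inv_one_add_mul_one_add_le_one _
  refine measure_inner_smul_lt_neg_one_eq_zero_of_map_restrict ν (by positivity) ?_
    (div_two_add_mul_le_one (by positivity) a_mul_le) hnull
  rw [mul_one]
  exact norm_div_two_add_smul_le_one a_nonneg p

end InnerProductSpace

/-- If `F {⟪π, z⟫ < -1} = 0` where `F` is the translated restricted measure,
then the renormalized vector `π'' = (a / (2 + a‖π‖)) • π` (with `a = 1/(1 + β⟪π, b⟫)` when
`β⟪π, b⟫ > 0` and `a = 1` otherwise) satisfies `ν {⟪π'', y⟫ < -1} = 0`. -/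
theorem stmt_1 {d : ℕ} (hd : 1 ≤ d)
    (ν : Measure (EuclideanSpace ℝ (Fin d))) [SigmaFinite ν]
    (b : EuclideanSpace ℝ (Fin d))
    (h0 : 0 < ν {y : EuclideanSpace ℝ (Fin d) | 1 < ‖y‖})
    (hfin : ν {y : EuclideanSpace ℝ (Fin d) | 1 < ‖y‖} < ⊤)
    (β : ℝ)
    (hβ : β = ((ν {y : EuclideanSpace ℝ (Fin d) | 1 < ‖y‖}).toReal)⁻¹)
    (F : Measure (EuclideanSpace ℝ (Fin d)))
    (hF : F = Measure.map (fun y => y + β • b)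
      (ν.restrict {y : EuclideanSpace ℝ (Fin d) | 1 < ‖y‖}))
    (π : EuclideanSpace ℝ (Fin d))
    (hπ : F {z : EuclideanSpace ℝ (Fin d) | ⟪π, z⟫ < -1} = 0)
    (a : ℝ)
    (ha : a = if 0 < β * ⟪π, b⟫ then (1 + β * ⟪π, b⟫)⁻¹ else 1)
    (π'' : EuclideanSpace ℝ (Fin d))
    (hπ'' : π'' = (a / (2 + a * ‖π‖)) • π) :
    ν {y : EuclideanSpace ℝ (Fin d) | ⟪π'', y⟫ < -1} = 0 := by
  subst hF hπ''
  exact stmt_1_general ν hπ (by rwa [real_inner_smul_right])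
end

section
/- Let d ≥ 1, let ν be a σ-finite Borel measure on ℝ^d with 0 < ν({y : ‖y‖ > 1}) < ∞ and ∫_{‖y‖>1} ‖y‖ dν(y) < ∞, let b ∈ ℝ^d, let β = 1/ν({y : ‖y‖ > 1}), and let F be the pushforward of the restriction of ν to {y : ‖y‖ > 1} under the translation y ↦ y + β·b. Assume that for every p ∈ ℝ^d with ν({y : ⟨p, y⟩ < −1}) = 0 one has ⟨p, b⟩ + ∫_{‖y‖>1} ⟨p, y⟩ dν(y) ≤ 0. Then for every π ∈ ℝ^d with F({z : ⟨π, z⟩ < −1}) = 0 one has ∫ ⟨π, z⟩ dF(z) ≤ 0. -/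
open MeasureTheory
open scoped RealInnerProductSpace ENNReal

/-!
Translating a jump measure of mass `ν(A)` by `b / ν(A)` adds exactly `L b` to the integral of `L`,
so `∫ L ∂F` is the drift rate of `L`. If `-1 ≤ L` holds `F`-a.e., then `L` is bounded below on the
large jumps; on the small jumps, which form a bounded set, it is bounded because it is linear and
continuous. Hence some positive multiple of `L` is at least `-1` `ν`-a.e., and the sign of its drift
rate is that of the drift rate of `L` by homogeneity.
-/

open Filter Bornology

section EssentialLowerBound

variable {α : Type*} [MeasurableSpace α] {μ : Measure α} {f : α → ℝ}

lemma exists_pos_ae_neg_one_le_mul (hf : IsBoundedUnder (· ≥ ·) (ae μ) f) :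
    ∃ c : ℝ, 0 < c ∧ ∀ᵐ x ∂μ, -1 ≤ c * f x := by
  obtain ⟨m, hm⟩ := hf.eventually_ge
  have hpos : 0 < 1 + |m| := by positivity
  refine ⟨(1 + |m|)⁻¹, inv_pos.2 hpos, hm.mono fun x hx => ?_⟩
  rw [le_inv_mul_iff₀ hpos]
  linarith [neg_abs_le m]

lemma isBoundedUnder_ge_ae_of_restrict {s : Set α} (hf : Measurable f)
    (hs : IsBoundedUnder (· ≥ ·) (ae (μ.restrict s)) f) (hsc : BddBelow (f '' sᶜ)) :
    IsBoundedUnder (· ≥ ·) (ae μ) f := by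
  obtain ⟨m, hm⟩ := hs.eventually_ge
  obtain ⟨m', hm'⟩ := hsc
  rw [ae_restrict_iff (measurableSet_le measurable_const hf)] at hm
  refine isBoundedUnder_of_eventually_ge (a := min m m') ?_
  filter_upwards [hm] with x hx
  by_cases hxs : x ∈ s
  · exact min_le_of_left_le (hx hxs)
  · exact min_le_of_right_le (hm' (Set.mem_image_of_mem f hxs))

end EssentialLowerBound

section Drift

variable {E : Type*} [NormedAddCommGroup E] [NormedSpace ℝ E] [MeasurableSpace E]

/-- The drift rate in the direction `L` of the semimartingale with local characteristics
`(b, ·, ν)`, where `A` is the set of jumps that are not compensated. -/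
noncomputable def driftRate (ν : Measure E) (A : Set E) (b : E) (L : StrongDual ℝ E) : ℝ :=
  L b + ∫ y in A, L y ∂ν

/-- The measure `F = (1_A ν) ⋆ δ_{βb}` with `β = 1 / ν(A)`: the jumps in `A`, translated so as to
absorb the drift `b`. The junk value is `β = 0` when `ν(A)` is `0` or `∞`. -/
noncomputable def driftShiftedJumps (ν : Measure E) (A : Set E) (b : E) : Measure E :=
  (ν.restrict A).map (· + (ν.real A)⁻¹ • b)

variable {ν : Measure E} {A : Set E} {b : E} {L : StrongDual ℝ E}

lemma driftRate_smul (c : ℝ) : driftRate ν A b (c • L) = c * driftRate ν A b L := by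
  simp only [driftRate, smul_apply, smul_eq_mul, integral_const_mul, mul_add]

variable [BorelSpace E]

lemma integrable_strongDual_of_integrable_norm (hν : Integrable (fun y => ‖y‖) ν) :
    Integrable L ν :=
  (hν.const_mul ‖L‖).mono' L.continuous.aestronglyMeasurable (ae_of_all _ L.le_opNorm)

lemma integral_strongDual_map_add_const [IsFiniteMeasure ν] (hL : Integrable L ν) (v : E) :
    ∫ z, L z ∂ν.map (· + v) = (∫ y, L y ∂ν) + ν.real Set.univ * L v := by
  rw [integral_map (continuous_add_const v).aemeasurable L.continuous.aestronglyMeasurable]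
  simp only [map_add]
  rw [integral_add hL (integrable_const _), integral_const, smul_eq_mul]

lemma integral_driftShiftedJumps (h0 : ν A ≠ 0) (hfin : ν A ≠ ∞) (hL : IntegrableOn L A ν) :
    ∫ z, L z ∂driftShiftedJumps ν A b = driftRate ν A b L := by
  have : IsFiniteMeasure (ν.restrict A) := isFiniteMeasure_restrict.2 hfin
  have hmass : ν.real A ≠ 0 := ENNReal.toReal_ne_zero.2 ⟨h0, hfin⟩
  rw [driftShiftedJumps, integral_strongDual_map_add_const hL, measureReal_restrict_apply_univ,
    map_smul, smul_eq_mul, mul_inv_cancel_left₀ hmass, add_comm, driftRate]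

lemma isBoundedUnder_ge_ae_of_map_add_const {v : E}
    (hL : IsBoundedUnder (· ≥ ·) (ae (ν.map (· + v))) L) :
    IsBoundedUnder (· ≥ ·) (ae ν) L := by
  obtain ⟨m, hm⟩ := hL.eventually_ge
  refine isBoundedUnder_of_eventually_ge (a := m - L v) ?_
  filter_upwards [ae_of_ae_map (continuous_add_const v).aemeasurable hm] with y hy
  rwa [map_add, ← sub_le_iff_le_add] at hy

lemma isBoundedUnder_ge_ae_of_driftShiftedJumps (hA : IsBounded Aᶜ)
    (hL : IsBoundedUnder (· ≥ ·) (ae (driftShiftedJumps ν A b)) L) :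
    IsBoundedUnder (· ≥ ·) (ae ν) L :=
  isBoundedUnder_ge_ae_of_restrict L.measurable (isBoundedUnder_ge_ae_of_map_add_const hL)
    (L.lipschitz.isBounded_image hA).bddBelow

theorem stmt_2_general (hA : IsBounded Aᶜ) (h0 : ν A ≠ 0) (hfin : ν A ≠ ∞)
    (hint : IntegrableOn (fun y => ‖y‖) A ν)
    (hsup : ∀ L : StrongDual ℝ E, (∀ᵐ y ∂ν, -1 ≤ L y) → driftRate ν A b L ≤ 0)
    (hL : ∀ᵐ z ∂driftShiftedJumps ν A b, -1 ≤ L z) :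
    ∫ z, L z ∂driftShiftedJumps ν A b ≤ 0 := by
  have hbdd : IsBoundedUnder (· ≥ ·) (ae ν) L :=
    isBoundedUnder_ge_ae_of_driftShiftedJumps hA (isBoundedUnder_of_eventually_ge hL)
  obtain ⟨c, hc, hcL⟩ := exists_pos_ae_neg_one_le_mul hbdd
  have hscaled : c * driftRate ν A b L ≤ 0 := by
    simpa only [driftRate_smul] using hsup (c • L) hcL
  rw [integral_driftShiftedJumps h0 hfin (integrable_strongDual_of_integrable_norm hint)]
  exact nonpos_of_mul_nonpos_right hscaled hc

end Drift

lemma isBounded_compl_setOf_lt_norm {E : Type*} [SeminormedAddCommGroup E] (r : ℝ) :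
    IsBounded {y : E | r < ‖y‖}ᶜ :=
  isBounded_iff_forall_norm_le.2 ⟨r, fun _ hy => not_lt.1 hy⟩

/-- If for every `p` with `ν {⟪p, y⟫ < -1} = 0` the drift rate
`⟪p, b⟫ + ∫_{‖y‖>1} ⟪p, y⟫ dν` is nonpositive, then for every `π` with
`F {⟪π, z⟫ < -1} = 0` one has `∫ ⟪π, z⟫ dF ≤ 0`. -/
theorem stmt_2 {d : ℕ} (hd : 1 ≤ d)
    (ν : Measure (EuclideanSpace ℝ (Fin d))) [SigmaFinite ν]
    (b : EuclideanSpace ℝ (Fin d))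
    (h0 : 0 < ν {y : EuclideanSpace ℝ (Fin d) | 1 < ‖y‖})
    (hfin : ν {y : EuclideanSpace ℝ (Fin d) | 1 < ‖y‖} < ⊤)
    (hint : Integrable (fun y : EuclideanSpace ℝ (Fin d) => ‖y‖)
      (ν.restrict {y : EuclideanSpace ℝ (Fin d) | 1 < ‖y‖}))
    (β : ℝ)
    (hβ : β = ((ν {y : EuclideanSpace ℝ (Fin d) | 1 < ‖y‖}).toReal)⁻¹)
    (F : Measure (EuclideanSpace ℝ (Fin d)))
    (hF : F = Measure.map (fun y => y + β • b)
      (ν.restrict {y : EuclideanSpace ℝ (Fin d) | 1 < ‖y‖}))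
    (hsup : ∀ p : EuclideanSpace ℝ (Fin d),
      ν {y : EuclideanSpace ℝ (Fin d) | ⟪p, y⟫ < -1} = 0 →
      ⟪p, b⟫ + ∫ y in {y : EuclideanSpace ℝ (Fin d) | 1 < ‖y‖}, ⟪p, y⟫ ∂ν ≤ 0) :
    ∀ π : EuclideanSpace ℝ (Fin d),
      F {z : EuclideanSpace ℝ (Fin d) | ⟪π, z⟫ < -1} = 0 →
      ∫ z, ⟪π, z⟫ ∂F ≤ 0 := by
  subst hβ hF
  intro π hπ
  exact stmt_2_general (L := innerSL ℝ π) (isBounded_compl_setOf_lt_norm 1) h0.ne' hfin.ne hint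
    (fun L hL => by
      simpa [driftRate] using hsup ((InnerProductSpace.toDual ℝ _).symm L)
        (by simpa [ae_iff] using hL))
    (by simpa [ae_iff, driftShiftedJumps, Measure.real] using hπ)
end

section
/- Let d ≥ 1, let ν be a σ-finite Borel measure on ℝ^d with 0 < ν({y : ‖y‖ > 1}) < ∞, let b ∈ ℝ^d, let β = 1/ν({y : ‖y‖ > 1}), and let F be the pushforward of the restriction of ν to {y : ‖y‖ > 1} under the translation y ↦ y + β·b. Let F̌ be a finite Borel measure on ℝ^d with F̌ ≪ F and F ≪ F̌, F̌(ℝ^d) = ν({y : ‖y‖ > 1}), ∫ ‖y‖ dF̌(y) < ∞ and ∫ y dF̌(y) = 0 (Bochner integral in ℝ^d), and set p = dF̌/dF. Then the function x ↦ x·p(x + β·b) is Bochner integrable on {x : ‖x‖ > 1} with respect to ν and b + ∫_{‖x‖>1} x · p(x + β·b) dν(x) = 0. -/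
open MeasureTheory
open scoped RealInnerProductSpace ENNReal

/-!
Let `F` be the image of `μ` under `x ↦ x + v` and `p = dρ/dF`. Substituting `y = x + v` carries the
reweighted measure `p (x + v) dμ(x)` to `ρ`, so that
`∫ p (x + v) • x dμ = ∫ (y - v) dρ = ∫ y dρ - ρ(E) • v`. The shift `v = β • b` with `β = ρ(E)⁻¹`
is the one for which the last term is `b`.
-/

section ChangeOfVariables

variable {α β E : Type*} [MeasurableSpace α] [MeasurableSpace β]
  [NormedAddCommGroup E] [NormedSpace ℝ E] {μ : Measure α} {ρ : Measure β} [SigmaFinite ρ]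
  {f : α → β} [ρ.HaveLebesgueDecomposition (μ.map f)] {g : β → E}

theorem integrable_rnDeriv_map_smul_comp (hf : AEMeasurable f μ) (hρ : ρ ≪ μ.map f)
    (hg : Integrable g ρ) :
    Integrable (fun x => (ρ.rnDeriv (μ.map f) (f x)).toReal • g (f x)) μ :=
  ((integrable_rnDeriv_smul_iff hρ).2 hg).comp_aemeasurable hf

theorem integral_rnDeriv_map_smul_comp (hf : AEMeasurable f μ) (hρ : ρ ≪ μ.map f)
    (hg : Integrable g ρ) :
    ∫ x, (ρ.rnDeriv (μ.map f) (f x)).toReal • g (f x) ∂μ = ∫ y, g y ∂ρ := by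
  rw [← integral_rnDeriv_smul hρ,
    integral_map hf ((integrable_rnDeriv_smul_iff hρ).2 hg).aestronglyMeasurable]

end ChangeOfVariables

instance sigmaFinite_map_add_const {G : Type*} [AddGroup G] [MeasurableSpace G] [MeasurableAdd G]
    {μ : Measure G} [SigmaFinite μ] (v : G) : SigmaFinite (μ.map (· + v)) :=
  (MeasurableEquiv.addRight v).sigmaFinite_map

section Translation

variable {E : Type*} [NormedAddCommGroup E] [NormedSpace ℝ E] [MeasurableSpace E] [BorelSpace E]
  {μ ρ : Measure E} [SigmaFinite μ] [IsFiniteMeasure ρ]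

theorem integrable_rnDeriv_map_add_const_smul {v : E} (hρ : ρ ≪ μ.map (· + v))
    (hint : Integrable (fun y => y) ρ) :
    Integrable (fun x => (ρ.rnDeriv (μ.map (· + v)) (x + v)).toReal • x) μ := by
  simpa only [add_sub_cancel_right] using
    integrable_rnDeriv_map_smul_comp (g := (· - v)) (measurable_add_const v).aemeasurable hρ
      (hint.sub (integrable_const v))

theorem integral_rnDeriv_map_add_const_smul [CompleteSpace E] {v : E} (hρ : ρ ≪ μ.map (· + v))
    (hint : Integrable (fun y => y) ρ) :
    ∫ x, (ρ.rnDeriv (μ.map (· + v)) (x + v)).toReal • x ∂μ =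
      ∫ y, y ∂ρ - ρ.real Set.univ • v :=
  calc ∫ x, (ρ.rnDeriv (μ.map (· + v)) (x + v)).toReal • x ∂μ
      = ∫ x, (ρ.rnDeriv (μ.map (· + v)) (x + v)).toReal • (x + v - v) ∂μ := by
        simp only [add_sub_cancel_right]
    _ = ∫ y, (y - v) ∂ρ :=
        integral_rnDeriv_map_smul_comp (measurable_add_const v).aemeasurable hρ
          (hint.sub (integrable_const v))
    _ = ∫ y, y ∂ρ - ρ.real Set.univ • v := by
        rw [integral_sub hint (integrable_const v), integral_const]

theorem stmt_6_general [CompleteSpace E] [NeZero ρ] {b : E} {β : ℝ}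
    (hβ : β = (ρ.real Set.univ)⁻¹) {F : Measure E} (hF : F = μ.map (fun y => y + β • b))
    (hρ : ρ ≪ F) (hint : Integrable (fun y => y) ρ) {p : E → ℝ}
    (hp : p = fun z => (ρ.rnDeriv F z).toReal) :
    Integrable (fun x => p (x + β • b) • x) μ ∧
      b + ∫ x, p (x + β • b) • x ∂μ = ∫ y, y ∂ρ := by
  subst hF hp
  have mass_smul_shift : ρ.real Set.univ • β • b = b := by
    rw [hβ, smul_inv_smul₀ measureReal_univ_ne_zero]
  refine ⟨integrable_rnDeriv_map_add_const_smul hρ hint, ?_⟩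
  rw [integral_rnDeriv_map_add_const_smul hρ hint, mass_smul_shift, add_sub_cancel]

end Translation

/-- With `p = dFc/dF` for a finite measure `Fc` equivalent to `F`
with total mass `ν {‖y‖ > 1}`, finite first moment and barycenter `0`, the function
`x ↦ p(x + β•b) • x` is integrable on `{‖x‖ > 1}` with respect to `ν` and
`b + ∫_{‖x‖>1} p(x + β•b) • x dν = 0`. -/
theorem stmt_6 {d : ℕ} (hd : 1 ≤ d)
    (ν : Measure (EuclideanSpace ℝ (Fin d))) [SigmaFinite ν]
    (b : EuclideanSpace ℝ (Fin d))
    (h0 : 0 < ν {y : EuclideanSpace ℝ (Fin d) | 1 < ‖y‖})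
    (hfin : ν {y : EuclideanSpace ℝ (Fin d) | 1 < ‖y‖} < ⊤)
    (β : ℝ)
    (hβ : β = ((ν {y : EuclideanSpace ℝ (Fin d) | 1 < ‖y‖}).toReal)⁻¹)
    (F : Measure (EuclideanSpace ℝ (Fin d)))
    (hF : F = Measure.map (fun y => y + β • b)
      (ν.restrict {y : EuclideanSpace ℝ (Fin d) | 1 < ‖y‖}))
    (Fc : Measure (EuclideanSpace ℝ (Fin d))) [IsFiniteMeasure Fc]
    (hac1 : Fc ≪ F) (hac2 : F ≪ Fc)
    (hmass : Fc Set.univ = ν {y : EuclideanSpace ℝ (Fin d) | 1 < ‖y‖})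
    (hint : Integrable (fun y : EuclideanSpace ℝ (Fin d) => y) Fc)
    (hcenter : (∫ y, y ∂Fc : EuclideanSpace ℝ (Fin d)) = 0)
    (p : EuclideanSpace ℝ (Fin d) → ℝ)
    (hp : p = fun z => (Fc.rnDeriv F z).toReal) :
    IntegrableOn (fun x : EuclideanSpace ℝ (Fin d) => p (x + β • b) • x)
      {y : EuclideanSpace ℝ (Fin d) | 1 < ‖y‖} ν
    ∧ b + ∫ x in {y : EuclideanSpace ℝ (Fin d) | 1 < ‖y‖}, p (x + β • b) • x ∂ν = 0 := by
  have hFc : NeZero Fc := ⟨fun h => h0.ne' (by rw [← hmass, h, Measure.coe_zero, Pi.zero_apply])⟩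
  have hβ_Fc : β = (Fc.real Set.univ)⁻¹ := by rw [hβ, measureReal_def, hmass]
  exact hcenter ▸ stmt_6_general hβ_Fc hF hac1 hint hp
end
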